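/- Let n ∈ ℕ and assume the Thirring polynomial system holds on a connected open set Ω. Suppose in addition that G(z,x,t)² − z F(z,x,t) H(z,x,t) = ∏_{m=0}^{2n+1}(z − E_m) for all z ∈ ℂ and (x,t) ∈ Ω, where E₀,…,E_{2n+1} ∈ ℂ, and that F(z,x,t) = −2 v(x,t) ∏_{j=1}^n (z − μ_j(x,t)) with v nonvanishing and the μ_j differentiable on Ω. Set c₁ = −(1/2) Σ_{m=0}^{2n+1} E_m and g_{n+1} = G(0,·,·). Then the trace formulas hold on Ω: (i) i v_x/v + 2 v v⁎ − 2 c₁ = 2 Σ_{j=1}^n μ_j; (ii) if all μ_j are nonvanishing, then i v_x/v − 2 v v⁎ = −i Σ_{j=1}^n μ_{j,x}/μ_j + 2 (−1)^n g_{n+1} / ∏_{j=1}^n μ_j; (iii) g_{n+1} u = (−1)^n v ∏_{j=1}^n μ_j. -/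

import Mathlib

/-!
Everything follows by comparing coefficients in `z` at a fixed point of `Ω`.

With `F = -2 v ∏ (z - μ_j)` one has `f₀ = -2 v` and `f₁ = 2 v ∑ μ_j`
(`coeffs_of_factorization`). The coefficient of `z ^ (n+1)`
in the `H_x` equation gives `h₀ = 2 v⁎`, and that of `z ^ (2n+1)` in `G² - z F H = ∏ (z - E_m)`
gives `2 g₁ - f₀ h₀ = -∑ E_m = 2 c₁` (`g1_eq`), hence `g₁ = c₁ - 2 v v⁎`. Inserting this in the
coefficient of `z ^ n` in the `F_x` equation (`coeffs_of_ode`),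
 `f₀_x = -2i v v⁎ f₀ + 2i f₁ + 4i v g₁`, and dividing
by `-2 v` gives (i).

At `z = 0` the `F_x` equation, divided by `F(0) = -2 (-1)^n v ∏ μ_j`, computes the logarithmic
derivative `v_x / v + ∑ μ_{j,x} / μ_j`, which is (ii). At `z = 0` the `F_t` equation reads
`0 = 2i F(0) + 4i u g_{n+1}`, which is (iii).
-/

noncomputable section

open Complex

/-- Partial derivative of a function of two real variables with respect to
the first (the `x`) variable. -/
def pdx (f : ℝ → ℝ → ℂ) (x t : ℝ) : ℂ := deriv (fun x' => f x' t) x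

/-- Partial derivative of a function of two real variables with respect to
the second (the `t`) variable. -/
def pdt (f : ℝ → ℝ → ℂ) (x t : ℝ) : ℂ := deriv (fun t' => f x t') t

/-- The data of the Thirring polynomial setup: functions `u, v, u⁎, v⁎` on `Ω ⊆ ℝ²`
and the coefficients of the `z`-polynomials `F`, `H` (degree `n`) and `G`
(degree `n+1`, with leading coefficient `gc 0 ≡ 1`), all coefficients
differentiable on `Ω` in each variable. -/
structure ThirringData (n : ℕ) (Ω : Set (ℝ × ℝ)) where
  u : ℝ → ℝ → ℂ
  v : ℝ → ℝ → ℂ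
  us : ℝ → ℝ → ℂ
  vs : ℝ → ℝ → ℂ
  f : ℕ → ℝ → ℝ → ℂ
  h : ℕ → ℝ → ℝ → ℂ
  gc : ℕ → ℝ → ℝ → ℂ
  hg0 : ∀ x t : ℝ, gc 0 x t = 1
  f_diff_x : ∀ (j : ℕ) (x t : ℝ), (x, t) ∈ Ω → DifferentiableAt ℝ (fun x' => f j x' t) x
  f_diff_t : ∀ (j : ℕ) (x t : ℝ), (x, t) ∈ Ω → DifferentiableAt ℝ (fun t' => f j x t') t
  h_diff_x : ∀ (j : ℕ) (x t : ℝ), (x, t) ∈ Ω → DifferentiableAt ℝ (fun x' => h j x' t) x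
  h_diff_t : ∀ (j : ℕ) (x t : ℝ), (x, t) ∈ Ω → DifferentiableAt ℝ (fun t' => h j x t') t
  gc_diff_x : ∀ (j : ℕ) (x t : ℝ), (x, t) ∈ Ω → DifferentiableAt ℝ (fun x' => gc j x' t) x
  gc_diff_t : ∀ (j : ℕ) (x t : ℝ), (x, t) ∈ Ω → DifferentiableAt ℝ (fun t' => gc j x t') t

namespace ThirringData

variable {n : ℕ} {Ω : Set (ℝ × ℝ)}

/-- `F(z,x,t) = Σ_{j=0}^n f_{n-j}(x,t) z^j`. -/
def F (S : ThirringData n Ω) (z : ℂ) (x t : ℝ) : ℂ :=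
  ∑ j ∈ Finset.range (n + 1), S.f (n - j) x t * z ^ j

/-- `H(z,x,t) = Σ_{j=0}^n h_{n-j}(x,t) z^j`. -/
def Hp (S : ThirringData n Ω) (z : ℂ) (x t : ℝ) : ℂ :=
  ∑ j ∈ Finset.range (n + 1), S.h (n - j) x t * z ^ j

/-- `G(z,x,t) = Σ_{j=0}^{n+1} g_{n+1-j}(x,t) z^j`. -/
def G (S : ThirringData n Ω) (z : ℂ) (x t : ℝ) : ℂ :=
  ∑ j ∈ Finset.range (n + 2), S.gc (n + 1 - j) x t * z ^ j

/-- The six equations of the Thirring polynomial system, as identities in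
`z ∈ ℂ` and `(x,t) ∈ Ω`. -/
def System (S : ThirringData n Ω) : Prop :=
  (∀ (z : ℂ) (x t : ℝ), (x, t) ∈ Ω →
    pdx (S.F z) x t =
      -2 * I * (S.v x t * S.vs x t - z) * S.F z x t + 4 * I * S.v x t * S.G z x t) ∧
  (∀ (z : ℂ) (x t : ℝ), (x, t) ∈ Ω →
    pdx (S.G z) x t = 2 * I * z * (S.vs x t * S.F z x t + S.v x t * S.Hp z x t)) ∧
  (∀ (z : ℂ) (x t : ℝ), (x, t) ∈ Ω →
    pdx (S.Hp z) x t =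
      2 * I * (S.v x t * S.vs x t - z) * S.Hp z x t + 4 * I * S.vs x t * S.G z x t) ∧
  (∀ (z : ℂ) (x t : ℝ), (x, t) ∈ Ω →
    z * pdt (S.F z) x t =
      -2 * I * (z * S.u x t * S.us x t - 1) * S.F z x t + 4 * I * S.u x t * S.G z x t) ∧
  (∀ (z : ℂ) (x t : ℝ), (x, t) ∈ Ω →
    pdt (S.G z) x t = 2 * I * (S.us x t * S.F z x t + S.u x t * S.Hp z x t)) ∧
  (∀ (z : ℂ) (x t : ℝ), (x, t) ∈ Ω →
    z * pdt (S.Hp z) x t =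
      2 * I * (z * S.u x t * S.us x t - 1) * S.Hp z x t + 4 * I * S.us x t * S.G z x t)

end ThirringData

open Polynomial in
/-- The polynomial `∑_{j=0}^N a_{N-j} X^j`; coefficients are indexed from the top degree down,
as in `F`, `G` and `H`. -/
def revPoly (N : ℕ) (a : ℕ → ℂ) : ℂ[X] :=
  ∑ j ∈ Finset.range (N + 1), C (a (N - j)) * X ^ j

lemma revPoly_eval (N : ℕ) (a : ℕ → ℂ) (z : ℂ) :
    (revPoly N a).eval z = ∑ j ∈ Finset.range (N + 1), a (N - j) * z ^ j := by
  simp [revPoly, Polynomial.eval_finsetSum]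

lemma revPoly_coeff (N : ℕ) (a : ℕ → ℂ) (k : ℕ) :
    (revPoly N a).coeff k = if k ≤ N then a (N - k) else 0 := by
  simp [revPoly, Polynomial.coeff_X_pow]

lemma revPoly_natDegree_le (N : ℕ) (a : ℕ → ℂ) : (revPoly N a).natDegree ≤ N := by
  rw [Polynomial.natDegree_le_iff_coeff_eq_zero]
  intro k hk
  rw [revPoly_coeff, if_neg (by omega)]

lemma revPoly_natDegree {N : ℕ} {a : ℕ → ℂ} (ha : a 0 = 1) : (revPoly N a).natDegree = N :=
  Polynomial.natDegree_eq_of_le_of_coeff_ne_zero (revPoly_natDegree_le N a)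
    (by simp [revPoly_coeff, ha])

lemma revPoly_monic {N : ℕ} {a : ℕ → ℂ} (ha : a 0 = 1) : (revPoly N a).Monic :=
  Polynomial.monic_of_natDegree_le_of_coeff_eq_one N (revPoly_natDegree_le N a)
    (by simp [revPoly_coeff, ha])

/-- The two leading coefficients of `F = -2 v ∏ (z - μ_j)`. -/
lemma coeffs_of_factorization {n : ℕ} (hn : 0 < n) (f : ℕ → ℂ) (v : ℂ) (μ : Fin n → ℂ)
    (h : ∀ z : ℂ, (revPoly n f).eval z = -2 * v * ∏ j, (z - μ j)) :
    f 0 = -2 * v ∧ f 1 = 2 * v * ∑ j, μ j := by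
  have hp : revPoly n f = Polynomial.C (-2 * v) * ∏ j, (Polynomial.X - Polynomial.C (μ j)) := by
    refine Polynomial.funext fun z => ?_
    rw [h]
    simp [Polynomial.eval_prod]
  have hm : (∏ j, (Polynomial.X - Polynomial.C (μ j))).Monic :=
    Polynomial.monic_prod_X_sub_C μ Finset.univ
  have hdeg : (∏ j, (Polynomial.X - Polynomial.C (μ j))).natDegree = n := by
    rw [Polynomial.natDegree_finsetProd_X_sub_C_eq_card]
    simp
  constructor
  · have h0 := congrArg (fun p => Polynomial.coeff p n) hp
    simp only [revPoly_coeff, Polynomial.coeff_C_mul] at h0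
    have h1 := hm.coeff_natDegree
    rw [hdeg] at h1
    simpa [h1] using h0
  · have h0 := congrArg (fun p => Polynomial.coeff p (n - 1)) hp
    have h1 := Polynomial.prod_X_sub_C_coeff_card_pred Finset.univ μ (by simpa using hn)
    rw [Finset.card_univ, Fintype.card_fin] at h1
    simp only [revPoly_coeff, Polynomial.coeff_C_mul, h1] at h0
    rw [if_pos (by omega), show n - (n - 1) = 1 by omega] at h0
    rw [h0]
    ring

/-- The coefficient of `z ^ (2n+1)` in `G² - z F H = ∏ (z - E_m)`. -/
lemma g1_eq {n : ℕ} (f g h : ℕ → ℂ) (hg : g 0 = 1) (E : Fin (2 * n + 2) → ℂ)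
    (hR : ∀ z : ℂ, (revPoly (n + 1) g).eval z ^ 2 -
      z * (revPoly n f).eval z * (revPoly n h).eval z = ∏ m, (z - E m)) :
    2 * g 1 - f 0 * h 0 = -∑ m, E m := by
  have hp : revPoly (n + 1) g ^ 2 - revPoly n f * revPoly n h * Polynomial.X
      = ∏ m, (Polynomial.X - Polynomial.C (E m)) := by
    refine Polynomial.funext fun z => ?_
    have := hR z
    simp only [Polynomial.eval_sub, Polynomial.eval_mul, Polynomial.eval_pow, Polynomial.eval_X,
      Polynomial.eval_prod, Polynomial.eval_C, ← this]
    ring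
  have hc := congrArg (fun p => Polynomial.coeff p (n + n + 1)) hp
  have hE := Polynomial.prod_X_sub_C_coeff_card_pred Finset.univ E (by simp)
  rw [Finset.card_univ, Fintype.card_fin, show 2 * n + 2 - 1 = n + n + 1 by omega] at hE
  have hFH := Polynomial.coeff_mul_add_eq_of_natDegree_le
    (revPoly_natDegree_le n f) (revPoly_natDegree_le n h)
  have hG := (revPoly_monic (N := n + 1) hg).nextCoeff_pow 2
  rw [Polynomial.nextCoeff_of_natDegree_pos
      (by rw [(revPoly_monic hg).natDegree_pow, revPoly_natDegree hg]; omega),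
    Polynomial.nextCoeff_of_natDegree_pos (by rw [revPoly_natDegree hg]; omega),
    (revPoly_monic hg).natDegree_pow, revPoly_natDegree hg,
    show 2 * (n + 1) - 1 = n + n + 1 by omega, revPoly_coeff] at hG
  simp only [Polynomial.coeff_sub, Polynomial.coeff_mul_X, hE, hFH, hG, revPoly_coeff] at hc
  simpa using hc

/-- A derivative equation `P' = α P + β z P + γ G` between polynomials with `deg P ≤ n` and
`deg G ≤ n+1`, in degrees `n+1` and `n`. Both the `F_x` and the `H_x` equation have this shape. -/
lemma coeffs_of_ode {n : ℕ} (hn : 0 < n) (p p' g : ℕ → ℂ) (α β γ : ℂ)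
    (h : ∀ z : ℂ, (revPoly n p').eval z =
      (α + β * z) * (revPoly n p).eval z + γ * (revPoly (n + 1) g).eval z) :
    β * p 0 + γ * g 0 = 0 ∧ p' 0 = α * p 0 + β * p 1 + γ * g 1 := by
  have hp : revPoly n p' = Polynomial.C α * revPoly n p +
      Polynomial.C β * (revPoly n p * Polynomial.X) + Polynomial.C γ * revPoly (n + 1) g := by
    refine Polynomial.funext fun z => ?_
    rw [h]
    simp
    ring
  obtain ⟨k, rfl⟩ : ∃ k, n = k + 1 := ⟨n - 1, by omega⟩
  constructor
  · have hc := congrArg (fun p => Polynomial.coeff p (k + 1 + 1)) hp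
    simp only [Polynomial.coeff_add, Polynomial.coeff_C_mul, Polynomial.coeff_mul_X,
      revPoly_coeff] at hc
    simpa using hc.symm
  · have hc := congrArg (fun p => Polynomial.coeff p (k + 1)) hp
    simp only [Polynomial.coeff_add, Polynomial.coeff_C_mul, Polynomial.coeff_mul_X,
      revPoly_coeff] at hc
    simpa using hc

lemma pdx_sum {n : ℕ} (a : ℕ → ℝ → ℝ → ℂ) (z : ℂ) (x t : ℝ)
    (ha : ∀ j, DifferentiableAt ℝ (fun x' => a j x' t) x) :
    pdx (fun x t => ∑ j ∈ Finset.range (n + 1), a (n - j) x t * z ^ j) x t =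
      (revPoly n fun j => pdx (a j) x t).eval z := by
  rw [revPoly_eval]
  unfold pdx
  rw [deriv_fun_sum fun j _ => (ha _).mul_const _]
  exact Finset.sum_congr rfl fun j _ => deriv_mul_const (ha _) _

/-- trace formulas for `v` in terms of the zeros `μ_j` of `F`. -/
theorem statement12 {n : ℕ} (hn : 0 < n) {Ω : Set (ℝ × ℝ)} (hΩ : IsOpen Ω)
    (hconn : IsConnected Ω)
    (S : ThirringData n Ω) (hsys : S.System)
    (E : Fin (2 * n + 2) → ℂ)
    (hR : ∀ (z : ℂ) (x t : ℝ), (x, t) ∈ Ω →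
      S.G z x t ^ 2 - z * S.F z x t * S.Hp z x t = ∏ m, (z - E m))
    (μ : Fin n → ℝ → ℝ → ℂ)
    (hFfac : ∀ (z : ℂ) (x t : ℝ), (x, t) ∈ Ω →
      S.F z x t = -2 * S.v x t * ∏ j, (z - μ j x t))
    (hv : ∀ x t : ℝ, (x, t) ∈ Ω → S.v x t ≠ 0)
    (hμ_x : ∀ (j : Fin n) (x t : ℝ), (x, t) ∈ Ω →
      DifferentiableAt ℝ (fun x' => μ j x' t) x)
    (c₁ : ℂ) (hc₁ : c₁ = -(1 / 2) * ∑ m, E m) :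
    (∀ x t : ℝ, (x, t) ∈ Ω →
      I * pdx S.v x t / S.v x t + 2 * S.v x t * S.vs x t - 2 * c₁
        = 2 * ∑ j, μ j x t) ∧
    ((∀ (j : Fin n) (x t : ℝ), (x, t) ∈ Ω → μ j x t ≠ 0) →
      ∀ x t : ℝ, (x, t) ∈ Ω →
        I * pdx S.v x t / S.v x t - 2 * S.v x t * S.vs x t
          = -I * ∑ j, pdx (μ j) x t / μ j x t +
            2 * (-1 : ℂ) ^ n * S.G 0 x t / ∏ j, μ j x t) ∧
    (∀ x t : ℝ, (x, t) ∈ Ω →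
      S.G 0 x t * S.u x t = (-1 : ℂ) ^ n * S.v x t * ∏ j, μ j x t) := by
  obtain ⟨hFx, -, hHx, hFt, -, -⟩ := hsys
  have eF : ∀ z x t, S.F z x t = (revPoly n fun j => S.f j x t).eval z :=
    fun z x t => (revPoly_eval n (fun j => S.f j x t) z).symm
  have eH : ∀ z x t, S.Hp z x t = (revPoly n fun j => S.h j x t).eval z :=
    fun z x t => (revPoly_eval n (fun j => S.h j x t) z).symm
  have eG : ∀ z x t, S.G z x t = (revPoly (n + 1) fun j => S.gc j x t).eval z :=
    fun z x t => (revPoly_eval (n + 1) (fun j => S.gc j x t) z).symm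
  have hf : ∀ x t : ℝ, (x, t) ∈ Ω →
      S.f 0 x t = -2 * S.v x t ∧ S.f 1 x t = 2 * S.v x t * ∑ j, μ j x t := fun x t hxt =>
    coeffs_of_factorization hn (fun j => S.f j x t) _ (fun j => μ j x t)
      fun z => by rw [← eF, hFfac z x t hxt]
  have hnear : ∀ x t : ℝ, (x, t) ∈ Ω → ∀ᶠ x' in nhds x, (x', t) ∈ Ω := fun x t hxt =>
    (Continuous.prodMk_left t).continuousAt.eventually (hΩ.mem_nhds hxt)
  -- Differentiability of `v` in `x` is inherited from the leading coefficient `f₀ = -2 v`.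
  have hv' : ∀ x t : ℝ, (x, t) ∈ Ω →
      (fun x' => S.v x' t) =ᶠ[nhds x] fun x' => (-1 / 2 : ℂ) * S.f 0 x' t := fun x t hxt =>
    (hnear x t hxt).mono fun x' hx' => by
      simp only [(hf x' t hx').1]
      ring
  have hvd : ∀ x t : ℝ, (x, t) ∈ Ω → DifferentiableAt ℝ (fun x' => S.v x' t) x :=
    fun x t hxt => ((S.f_diff_x 0 x t hxt).const_mul _).congr_of_eventuallyEq (hv' x t hxt)
  have hvx : ∀ x t : ℝ, (x, t) ∈ Ω → pdx (S.f 0) x t = -2 * pdx S.v x t := fun x t hxt => by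
    have h1 : pdx S.v x t = (-1 / 2 : ℂ) * pdx (S.f 0) x t :=
      (hv' x t hxt).deriv_eq.trans (deriv_const_mul _ (S.f_diff_x 0 x t hxt))
    rw [h1]
    ring
  have hF0 : ∀ x t : ℝ, (x, t) ∈ Ω →
      S.F 0 x t = -2 * S.v x t * ((-1) ^ n * ∏ j, μ j x t) := fun x t hxt => by
    rw [hFfac 0 x t hxt]
    simp [Finset.prod_neg]
  refine ⟨fun x t hxt => ?_, fun hμ x t hxt => ?_, fun x t hxt => ?_⟩
  · have hv0 := hv x t hxt
    obtain ⟨hf0, hf1⟩ := hf x t hxt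
    have h1 := g1_eq (fun j => S.f j x t) (fun j => S.gc j x t) (fun j => S.h j x t)
      (S.hg0 x t) E (fun z => by rw [← eF, ← eG, ← eH, hR z x t hxt])
    have h2 := (coeffs_of_ode hn (fun j => S.f j x t) (fun j => pdx (S.f j) x t)
      (fun j => S.gc j x t) (-2 * I * (S.v x t * S.vs x t)) (2 * I) (4 * I * S.v x t)
      (fun z => by
        rw [← eF, ← eG, ← pdx_sum S.f z x t fun j => S.f_diff_x j x t hxt]
        refine (hFx z x t hxt).trans ?_
        ring)).2
    have h3 := (coeffs_of_ode hn (fun j => S.h j x t) (fun j => pdx (S.h j) x t)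
      (fun j => S.gc j x t) (2 * I * (S.v x t * S.vs x t)) (-2 * I) (4 * I * S.vs x t)
      (fun z => by
        rw [← eH, ← eG, ← pdx_sum S.h z x t fun j => S.h_diff_x j x t hxt]
        refine (hHx z x t hxt).trans ?_
        ring)).1
    simp only [S.hg0, hvx x t hxt, hf0, hf1] at h1 h2 h3
    have hh0 : S.h 0 x t = 2 * S.vs x t :=
      mul_left_cancel₀ I_ne_zero (by linear_combination -(1 / 2 : ℂ) * h3)
    rw [hh0] at h1
    subst hc₁
    field_simp
    linear_combination (-I / 2) * h2 + S.v x t * h1 +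
      (-2 * S.v x t ^ 2 * S.vs x t - 2 * S.v x t * ∑ j, μ j x t - 2 * S.v x t * S.gc 1 x t)
        * I_sq
  · have hv0 := hv x t hxt
    have hP : ∏ j, μ j x t ≠ 0 := Finset.prod_ne_zero_iff.2 fun j _ => hμ j x t hxt
    have hs : ((-1 : ℂ) ^ n) * (-1) ^ n = 1 := by rw [← mul_pow]; simp
    have hs0 : (-1 : ℂ) ^ n ≠ 0 := pow_ne_zero _ (by simp)
    have hprod : DifferentiableAt ℝ (fun x' => ∏ j, μ j x' t) x :=
      .fun_finsetProd fun j _ => hμ_x j x t hxt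
    -- The logarithmic derivative of `F(0) = const * (v * ∏ μ_j)`.
    have hlog : pdx (S.F 0) x t / S.F 0 x t =
        pdx S.v x t / S.v x t + ∑ j, pdx (μ j) x t / μ j x t := by
      have he : (fun x' => S.F 0 x' t) =ᶠ[nhds x]
          fun x' => (-2 * (-1) ^ n : ℂ) * (S.v x' t * ∏ j, μ j x' t) :=
        (hnear x t hxt).mono fun x' hx' => by
          simp only [hF0 x' t hx']
          ring
      have h1 := (logDeriv_congr_nhds he).eq_of_nhds
      rw [logDeriv_const_mul _ _ (by simp), logDeriv_mul x hv0 hP (hvd x t hxt) hprod,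
        logDeriv_prod (f := fun j x' => μ j x' t) (fun j _ => hμ j x t hxt) (fun j _ => hμ_x j x t hxt)] at h1
      exact h1
    have hF0ne : S.F 0 x t ≠ 0 := by
      rw [hF0 x t hxt]
      exact mul_ne_zero (mul_ne_zero (by simp) hv0) (mul_ne_zero hs0 hP)
    have hq : S.v x t / S.F 0 x t = -(1 / 2) * (-1) ^ n / ∏ j, μ j x t := by
      rw [div_eq_div_iff hF0ne hP, hF0 x t hxt]
      linear_combination -(S.v x t * ∏ j, μ j x t) * hs
    have hx : pdx (S.F 0) x t / S.F 0 x t =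
        -2 * I * (S.v x t * S.vs x t) + 4 * I * S.G 0 x t * (S.v x t / S.F 0 x t) := by
      rw [hFx 0 x t hxt]
      field_simp
      ring
    rw [hlog, hq] at hx
    linear_combination I * hx +
      (-2 * S.v x t * S.vs x t - 2 * S.G 0 x t * (-1) ^ n / ∏ j, μ j x t) * I_sq
  · have h := hFt 0 x t hxt
    rw [hF0 x t hxt] at h
    refine mul_left_cancel₀ I_ne_zero ?_
    linear_combination -(1 / 4 : ℂ) * h
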